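/- arXiv:1301.6086 — 5 statements merged into one kernel-verified Lean document; each statement's English description precedes it below -/
import Mathlib

section
/- For every integer b ≥ 2, every integer k with 1 ≤ k ≤ b − 1, every natural number α ≥ 1, and every integer N with (k+1)·b^α − 1 ≤ N < k·b^{α+1} − 1, the sequence is strictly decreasing on this range: P_{b,N+1}(k) < P_{b,N}(k). -/
/-- The leading digit of `x` in base `b`: `⌊x / b^⌊log_b x⌋⌋`. -/
def leadingDigit (b x : ℕ) : ℕ := x / b ^ Nat.log b x

/-- `P b N k` is the frequency of leading digit `k` among `1, …, N` in base `b`. -/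
noncomputable def leadingDigitFreq (b N k : ℕ) : ℝ :=
  (((Finset.Icc 1 N).filter (fun x => leadingDigit b x = k)).card : ℝ) / N

theorem freq_strict_anti_between (b k α N : ℕ) (hb : 2 ≤ b) (hk1 : 1 ≤ k) (hk2 : k ≤ b - 1)
    (hα : 1 ≤ α) (hN1 : (k + 1) * b ^ α - 1 ≤ N) (hN2 : N < k * b ^ (α + 1) - 1) :
    leadingDigitFreq b (N + 1) k < leadingDigitFreq b N k := by
  have hp : 1 ≤ b ^ α := Nat.one_le_pow _ _ (by omega)
  have hlo : (k + 1) * b ^ α ≤ N + 1 := by omega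
  have hhi : N + 1 < k * b ^ (α + 1) := by omega
  have hkN : k ≤ N := by
    have : k + 1 ≤ (k + 1) * b ^ α := Nat.le_mul_of_pos_right _ hp
    omega
  have hne : leadingDigit b (N + 1) ≠ k := by
    unfold leadingDigit
    intro h
    have hl1 : α ≤ Nat.log b (N + 1) := by
      apply Nat.le_log_of_pow_le (by omega)
      nlinarith
    have hpos : 0 < b ^ Nat.log b (N + 1) := Nat.pow_pos (by omega)
    rcases Nat.eq_or_lt_of_le hl1 with h1 | h1
    · rw [← h1] at h
      have := (Nat.le_div_iff_mul_le (by omega : 0 < b ^ α)).2 hlo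
      omega
    · have h2 : b ^ (α + 1) ≤ b ^ Nat.log b (N + 1) :=
        Nat.pow_le_pow_right (by omega) h1
      have h3 : (N + 1) / b ^ Nat.log b (N + 1) < k := by
        rw [Nat.div_lt_iff_lt_mul hpos]
        exact lt_of_lt_of_le hhi (Nat.mul_le_mul_left _ h2)
      omega
  have hcard : (Finset.Icc 1 (N + 1)).filter (fun x => leadingDigit b x = k)
      = (Finset.Icc 1 N).filter (fun x => leadingDigit b x = k) := by
    ext x
    simp only [Finset.mem_filter, Finset.mem_Icc]
    constructor
    · rintro ⟨⟨h1, h2⟩, h3⟩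
      have : x ≠ N + 1 := by
        rintro rfl
        exact hne h3
      exact ⟨⟨h1, by omega⟩, h3⟩
    · rintro ⟨⟨h1, h2⟩, h3⟩
      exact ⟨⟨h1, by omega⟩, h3⟩
  have hc : 0 < ((Finset.Icc 1 N).filter (fun x => leadingDigit b x = k)).card := by
    apply Finset.card_pos.2
    refine ⟨k, ?_⟩
    simp only [Finset.mem_filter, Finset.mem_Icc]
    refine ⟨⟨hk1, hkN⟩, ?_⟩
    unfold leadingDigit
    rw [Nat.log_of_lt (by omega)]
    simp
  unfold leadingDigitFreq
  rw [hcard]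
  apply div_lt_div_of_pos_left
  · exact_mod_cast hc
  · exact_mod_cast (by omega : 0 < N)
  · exact_mod_cast Nat.lt_succ_self N
end

section
/- For every integer b ≥ 2 and every integer k with 1 ≤ k ≤ b − 1, liminf_{N→∞} P_{b,N}(k) = 1/(k(b − 1)). -/
theorem ld_count_none (p : ℕ → Prop) [DecidablePred p] (a m : ℕ)
    (h : ∀ x, a ≤ x → x < m → ¬ p x) (ham : a ≤ m) : Nat.count p m = Nat.count p a := by
  induction m, ham using Nat.le_induction with
  | base => rfl
  | succ m hm ih =>
    rw [Nat.count_succ, ih (fun x h1 h2 => h x h1 (by omega)), if_neg (h m hm (by omega)), Nat.add_zero]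

theorem ld_count_all (p : ℕ → Prop) [DecidablePred p] (a m : ℕ)
    (h : ∀ x, a ≤ x → x < m → p x) (ham : a ≤ m) :
    Nat.count p m + a = Nat.count p a + m := by
  induction m, ham using Nat.le_induction with
  | base => rfl
  | succ m hm ih =>
    have := ih (fun x h1 h2 => h x h1 (by omega))
    rw [Nat.count_succ, if_pos (h m hm (by omega))]
    omega

theorem ld_iff (b k n x : ℕ) (hb : 2 ≤ b) (h1 : b ^ n ≤ x) (h2 : x < b ^ (n + 1)) :
    leadingDigit b x = k ↔ k * b ^ n ≤ x ∧ x < (k + 1) * b ^ n := by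
  have : Nat.log b x = n := Nat.log_eq_of_pow_le_of_lt_pow h1 h2
  unfold leadingDigit
  rw [this, Nat.div_eq_iff (by positivity)]
  have : 0 < b ^ n := by positivity
  rw [Nat.add_mul, one_mul]
  omega

theorem ld_facts (b k n : ℕ) (hb : 2 ≤ b) (hk1 : 1 ≤ k) (hk2 : k + 1 ≤ b) :
    (∀ m, b ^ n ≤ m → m ≤ k * b ^ n →
      Nat.count (fun x => leadingDigit b x = k) m
        = Nat.count (fun x => leadingDigit b x = k) (b ^ n)) ∧
    (∀ m, k * b ^ n ≤ m → m ≤ (k + 1) * b ^ n →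
      Nat.count (fun x => leadingDigit b x = k) m + k * b ^ n
        = Nat.count (fun x => leadingDigit b x = k) (b ^ n) + m) ∧
    (∀ m, (k + 1) * b ^ n ≤ m → m ≤ b ^ (n + 1) →
      Nat.count (fun x => leadingDigit b x = k) m
        = Nat.count (fun x => leadingDigit b x = k) (b ^ n) + b ^ n) := by
  have e1 : b ^ n ≤ k * b ^ n := Nat.le_mul_of_pos_left _ hk1
  have e2 : (k + 1) * b ^ n ≤ b ^ (n + 1) := by
    rw [pow_succ, mul_comm (b ^ n)]; exact Nat.mul_le_mul_right _ hk2
  have e3 : (k + 1) * b ^ n = k * b ^ n + b ^ n := by ring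
  have A : ∀ m, b ^ n ≤ m → m ≤ k * b ^ n →
      Nat.count (fun x => leadingDigit b x = k) m
        = Nat.count (fun x => leadingDigit b x = k) (b ^ n) := by
    intro m h1 h2
    apply ld_count_none _ _ _ _ h1
    intro x hx1 hx2
    rw [ld_iff b k n x hb hx1 (by omega)]
    omega
  have B : ∀ m, k * b ^ n ≤ m → m ≤ (k + 1) * b ^ n →
      Nat.count (fun x => leadingDigit b x = k) m + k * b ^ n
        = Nat.count (fun x => leadingDigit b x = k) (b ^ n) + m := by
    intro m h1 h2
    rw [← A _ e1 le_rfl]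
    apply ld_count_all _ _ _ _ h1
    intro x hx1 hx2
    rw [ld_iff b k n x hb (by omega) (by omega)]
    omega
  refine ⟨A, B, ?_⟩
  intro m h1 h2
  have := B _ (by omega) le_rfl
  rw [ld_count_none _ _ _ _ h1]
  · omega
  · intro x hx1 hx2
    rw [ld_iff b k n x hb (by omega) (by omega)]
    omega

theorem ld_pow (b k n : ℕ) (hb : 2 ≤ b) (hk1 : 1 ≤ k) (hk2 : k + 1 ≤ b) :
    ((b : ℝ) - 1) * (Nat.count (fun x => leadingDigit b x = k) (b ^ n) : ℝ) + 1 = (b : ℝ) ^ n := by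
  induction n with
  | zero =>
    have : ¬ (0 = k) := by omega
    have hz : Nat.count (fun x => leadingDigit b x = k) (0 + 1) = 0 := by
      rw [Nat.count_succ, Nat.count_zero]
      simp [leadingDigit, this]
    rw [pow_zero, pow_zero, show (1 : ℕ) = 0 + 1 from rfl, hz]
    simp
  | succ n ih =>
    have e2 : (k + 1) * b ^ n ≤ b ^ (n + 1) := by
      rw [pow_succ, mul_comm (b ^ n)]; exact Nat.mul_le_mul_right _ hk2
    rw [(ld_facts b k n hb hk1 hk2).2.2 _ e2 le_rfl]
    push_cast
    rw [pow_succ]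
    linear_combination ih

theorem ld_lower (b k m : ℕ) (hb : 2 ≤ b) (hk1 : 1 ≤ k) (hk2 : k + 1 ≤ b) (hm : 1 ≤ m) :
    (m : ℝ) ≤ (k : ℝ) * ((b : ℝ) - 1) *
      (Nat.count (fun x => leadingDigit b x = k) m : ℝ) + k := by
  obtain ⟨n, h1, h2⟩ : ∃ n, b ^ n ≤ m ∧ m < b ^ (n + 1) :=
    ⟨Nat.log b m, Nat.pow_log_le_self b (by omega), Nat.lt_pow_succ_log_self (by omega) m⟩
  obtain ⟨A, B, C⟩ := ld_facts b k n hb hk1 hk2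
  have P := ld_pow b k n hb hk1 hk2
  have hkr : (1 : ℝ) ≤ k := by exact_mod_cast hk1
  have hbr : (2 : ℝ) ≤ b := by exact_mod_cast hb
  rcases le_total m (k * b ^ n) with h | h
  · rw [A m h1 h]
    have h' : (m : ℝ) ≤ k * (b : ℝ) ^ n := by exact_mod_cast h
    rw [← P] at h'
    linarith
  · rcases le_total m ((k + 1) * b ^ n) with h3 | h3
    · have B' := B m h h3
      have B2 : (Nat.count (fun x => leadingDigit b x = k) m : ℝ) + k * (b : ℝ) ^ n
        = Nat.count (fun x => leadingDigit b x = k) (b ^ n) + m := by exact_mod_cast B'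
      have h' : k * (b : ℝ) ^ n ≤ (m : ℝ) := by exact_mod_cast h
      have hc : (1 : ℝ) ≤ k * ((b : ℝ) - 1) := by nlinarith
      have e : (Nat.count (fun x => leadingDigit b x = k) m : ℝ)
        = Nat.count (fun x => leadingDigit b x = k) (b ^ n) + (m - k * (b : ℝ) ^ n) := by linarith
      rw [e]
      have := mul_le_mul_of_nonneg_right hc (sub_nonneg.2 h')
      have P2 := congrArg (fun t => (k : ℝ) * t) P
      linarith
    · rw [C m h3 h2.le]
      have h' : (m : ℝ) ≤ (b : ℝ) ^ (n + 1) := by exact_mod_cast h2.le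
      rw [pow_succ] at h'
      push_cast
      have e : ((b : ℝ) - 1) * ((Nat.count (fun x => leadingDigit b x = k) (b ^ n) : ℝ) + (b : ℝ) ^ n)
        + 1 = (b : ℝ) ^ n * b := by linear_combination P
      have hp : 0 ≤ (b : ℝ) ^ n * b := by positivity
      nlinarith

theorem ld_freq_eq (b k N : ℕ) (hk1 : 1 ≤ k) :
    leadingDigitFreq b N k = (Nat.count (fun x => leadingDigit b x = k) (N + 1) : ℝ) / N := by
  unfold leadingDigitFreq
  rw [Nat.count_eq_card_filter_range]
  congr 3
  ext x
  simp only [Finset.mem_filter, Finset.mem_Icc, Finset.mem_range]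
  constructor
  · rintro ⟨h, h'⟩; exact ⟨by omega, h'⟩
  · rintro ⟨h, h'⟩
    refine ⟨⟨?_, by omega⟩, h'⟩
    rcases Nat.eq_zero_or_pos x with rfl | h0
    · simp [leadingDigit] at h'; omega
    · exact h0

theorem freq_liminf (b k : ℕ) (hb : 2 ≤ b) (hk1 : 1 ≤ k) (hk2 : k ≤ b - 1) :
    Filter.liminf (fun N : ℕ => leadingDigitFreq b N k) Filter.atTop
      = 1 / ((k : ℝ) * ((b : ℝ) - 1)) := by
  have hk3 : k + 1 ≤ b := by omega
  have hkr : (1 : ℝ) ≤ k := by exact_mod_cast hk1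
  have hbr : (2 : ℝ) ≤ b := by exact_mod_cast hb
  have hc : (0 : ℝ) < k * ((b : ℝ) - 1) := by nlinarith
  have hnn : ∀ N, 0 ≤ leadingDigitFreq b N k := fun N => by unfold leadingDigitFreq; positivity
  have hle1 : ∀ N, leadingDigitFreq b N k ≤ 1 := fun N => by
    unfold leadingDigitFreq
    apply div_le_one_of_le₀ _ (by positivity)
    have := Finset.card_filter_le (Finset.Icc 1 N) (fun x => leadingDigit b x = k)
    rw [Nat.card_Icc] at this
    exact_mod_cast this
  apply le_antisymm
  · apply Filter.liminf_le_of_frequently_le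
    · rw [Filter.frequently_atTop]
      intro a
      have hn : a + 1 < b ^ (a + 1) := Nat.lt_pow_self (by omega)
      have e1 : b ^ (a + 1) ≤ k * b ^ (a + 1) := Nat.le_mul_of_pos_left _ hk1
      refine ⟨k * b ^ (a + 1) - 1, by omega, ?_⟩
      rw [ld_freq_eq b k _ hk1, Nat.sub_add_cancel (by omega),
        (ld_facts b k (a + 1) hb hk1 hk3).1 _ e1 le_rfl]
      have P := ld_pow b k (a + 1) hb hk1 hk3
      have e2 : (a : ℝ) + 1 < k * (b : ℝ) ^ (a + 1) := by exact_mod_cast lt_of_lt_of_le hn e1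
      rw [Nat.cast_sub (by omega)]
      push_cast
      have : (0 : ℝ) ≤ a := by positivity
      rw [div_le_div_iff₀ (by linarith) hc, ← P]
      linarith
    · exact Filter.isBoundedUnder_of ⟨0, hnn⟩
  · have ht : Filter.Tendsto (fun N : ℕ => 1 / ((k : ℝ) * ((b : ℝ) - 1)) -
        (k / ((k : ℝ) * ((b : ℝ) - 1))) / (N : ℝ)) Filter.atTop
        (nhds (1 / ((k : ℝ) * ((b : ℝ) - 1)))) := by
      simpa using (tendsto_const_nhds (x := 1 / ((k : ℝ) * ((b : ℝ) - 1)))).sub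
        (tendsto_const_div_atTop_nhds_zero_nat (k / ((k : ℝ) * ((b : ℝ) - 1))))
    rw [← ht.liminf_eq]
    apply Filter.liminf_le_liminf
    · filter_upwards [Filter.eventually_ge_atTop 1] with N hN
      have L := ld_lower b k (N + 1) hb hk1 hk3 (by omega)
      rw [ld_freq_eq b k N hk1]
      push_cast at L
      have hN' : (0 : ℝ) < N := by exact_mod_cast hN
      rw [le_div_iff₀ hN', sub_mul, div_mul_cancel₀ _ hN'.ne', one_div_mul_eq_div, ← sub_div,
        div_le_iff₀ hc]
      linarith
    · exact ht.isBoundedUnder_ge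
    · exact (Filter.isBoundedUnder_of ⟨1, hle1⟩ :
        Filter.IsBoundedUnder (· ≤ ·) Filter.atTop _).isCoboundedUnder_ge
end

section
/- For every integer b ≥ 3 and every integer k with 1 ≤ k ≤ b − 1, the sequence (P_{b,N}(k))_{N=1}^{∞} does not converge; in fact its liminf 1/(k(b − 1)) is strictly less than its limsup b/((k+1)(b − 1)). -/
/-- counting function on `1 ≤ x < m` -/
def cnt (b k m : ℕ) : ℕ := ((Finset.Icc 1 (m - 1)).filter (fun x => leadingDigit b x = k)).card

lemma cnt_succ (b k m : ℕ) (hm : 1 ≤ m) :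
    cnt b k (m + 1) = cnt b k m + if leadingDigit b m = k then 1 else 0 := by
  obtain ⟨n, rfl⟩ : ∃ n, m = n + 1 := ⟨m - 1, by omega⟩
  unfold cnt
  simp only [Nat.add_sub_cancel]
  rw [← Finset.insert_Icc_right_eq_Icc_add_one (by omega : 1 ≤ n + 1), Finset.filter_insert]
  split_ifs with h
  · rw [Finset.card_insert_of_notMem (by simp)]
  · rfl

lemma lead_iff (b k m n : ℕ) (hb : 3 ≤ b) (h1 : b ^ n ≤ m) (h2 : m < b ^ (n + 1)) :
    leadingDigit b m = k ↔ k * b ^ n ≤ m ∧ m < (k + 1) * b ^ n := by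
  have hl : Nat.log b m = n := Nat.log_eq_of_pow_le_of_lt_pow h1 h2
  have hp : 0 < b ^ n := by positivity
  unfold leadingDigit
  rw [hl]
  rw [Nat.div_eq_iff hp]
  have : (k + 1) * b ^ n = k * b ^ n + b ^ n := by ring
  omega

lemma cnt_block (b k n : ℕ) (hb : 3 ≤ b) (hk : 1 ≤ k) (m : ℕ) (h1 : b ^ n ≤ m) :
    m ≤ b ^ (n + 1) →
    cnt b k m = cnt b k (b ^ n) + (min m (k * b ^ n + b ^ n) - k * b ^ n) := by
  have hp : 0 < b ^ n := by positivity
  have hkp : b ^ n ≤ k * b ^ n := Nat.le_mul_of_pos_left _ hk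
  induction m, h1 using Nat.le_induction with
  | base => intro _; omega
  | succ m hm ih =>
    intro h
    have h3 := ih (by omega)
    rw [cnt_succ b k m (by omega), h3]
    have := lead_iff b k m n hb hm (by omega)
    have e : (k + 1) * b ^ n = k * b ^ n + b ^ n := by ring
    rw [e] at this
    split_ifs with hc
    · rw [this] at hc; omega
    · rw [this] at hc; omega

lemma cnt_pow (b k n : ℕ) (hb : 3 ≤ b) (hk : 1 ≤ k) (hk2 : k + 1 ≤ b) :
    (b - 1 : ℝ) * cnt b k (b ^ n) = (b : ℝ) ^ n - 1 := by
  induction n with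
  | zero => simp [cnt]
  | succ n ih =>
    have hle : b ^ n ≤ b ^ (n + 1) := Nat.pow_le_pow_right (by omega) (by omega)
    have h := cnt_block b k n hb hk (b ^ (n + 1)) hle le_rfl
    have h5 : k * b ^ n + b ^ n ≤ b ^ (n + 1) := by
      calc k * b ^ n + b ^ n = (k + 1) * b ^ n := by ring
        _ ≤ b * b ^ n := Nat.mul_le_mul_right _ hk2
        _ = _ := by ring
    have h6 : cnt b k (b ^ (n + 1)) = cnt b k (b ^ n) + b ^ n := by omega
    rw [h6]; push_cast; rw [mul_add, ih]; ring

lemma freq_eq (b k N : ℕ) : leadingDigitFreq b N k = (cnt b k (N + 1) : ℝ) / N := rfl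

lemma cnt_bounds (b k m : ℕ) (hb : 3 ≤ b) (hk : 1 ≤ k) (hk2 : k + 1 ≤ b) (hm : 1 ≤ m) :
    (m : ℝ) ≤ k * (b - 1) * cnt b k m + k ∧ (k + 1 : ℝ) * (b - 1) * cnt b k m ≤ b * m := by
  have h1 : b ^ Nat.log b m ≤ m := Nat.pow_log_le_self b (by omega)
  have h2 : m < b ^ (Nat.log b m + 1) := Nat.lt_pow_succ_log_self (by omega) m
  generalize Nat.log b m = n at h1 h2
  have h := cnt_block b k n hb hk m h1 h2.le
  have hg := cnt_pow b k n hb hk hk2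
  have h2' : (m : ℝ) < b * (b : ℝ) ^ n := by rw [← pow_succ']; exact_mod_cast h2
  have h1' : (b : ℝ) ^ n ≤ m := by exact_mod_cast h1
  have hbR : (3 : ℝ) ≤ b := by exact_mod_cast hb
  have hkR : (1 : ℝ) ≤ k := by exact_mod_cast hk
  have hk2R : (k : ℝ) + 1 ≤ b := by exact_mod_cast hk2
  have hB : (0 : ℝ) < (b : ℝ) ^ n := by positivity
  have e1 : (k : ℝ) * (b - 1) * cnt b k (b ^ n) = k * ((b : ℝ) ^ n - 1) := by rw [← hg]; ring
  have e2 : ((k : ℝ) + 1) * (b - 1) * cnt b k (b ^ n) = (k + 1) * ((b : ℝ) ^ n - 1) := by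
    rw [← hg]; ring
  rcases le_total m (k * b ^ n) with hc | hc
  · have h0 : cnt b k m = cnt b k (b ^ n) := by omega
    have hc' : (m : ℝ) ≤ k * (b : ℝ) ^ n := by exact_mod_cast hc
    rw [h0, e1, e2]
    constructor
    · linarith
    · nlinarith
  rcases le_total m (k * b ^ n + b ^ n) with hd | hd
  · have h0 : cnt b k m + k * b ^ n = cnt b k (b ^ n) + m := by omega
    have h0' : (cnt b k m : ℝ) = cnt b k (b ^ n) + (m - k * (b : ℝ) ^ n) := by
      have : (cnt b k m : ℝ) + k * (b : ℝ) ^ n = cnt b k (b ^ n) + m := by exact_mod_cast h0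
      linarith
    have hc' : k * (b : ℝ) ^ n ≤ m := by exact_mod_cast hc
    have hd' : (m : ℝ) ≤ k * (b : ℝ) ^ n + (b : ℝ) ^ n := by exact_mod_cast hd
    rw [h0', mul_add, mul_add, e1, e2]
    constructor
    · have : (1 : ℝ) ≤ k * (b - 1) := by nlinarith
      nlinarith
    · have : (0 : ℝ) ≤ (k + 1) * (b - 1) - b := by nlinarith
      nlinarith
  · have h0 : cnt b k m = cnt b k (b ^ n) + b ^ n := by omega
    have hd' : k * (b : ℝ) ^ n + (b : ℝ) ^ n ≤ m := by exact_mod_cast hd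
    rw [h0]; push_cast; rw [mul_add, mul_add, e1, e2]
    constructor
    · have : b * (b : ℝ) ^ n ≤ k * (b * (b : ℝ) ^ n) := le_mul_of_one_le_left (by positivity) hkR
      nlinarith
    · nlinarith

lemma freq_low (b k n : ℕ) (hb : 3 ≤ b) (hk : 1 ≤ k) (hk2 : k + 1 ≤ b) (hn : 1 ≤ n) :
    leadingDigitFreq b (k * b ^ n - 1) k ≤ 1 / ((k : ℝ) * ((b : ℝ) - 1)) := by
  have hbn : b ≤ b ^ n := Nat.le_self_pow (by omega) b
  have hkp : b ^ n ≤ k * b ^ n := Nat.le_mul_of_pos_left _ hk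
  have hle : k * b ^ n ≤ b ^ (n + 1) := by
    rw [pow_succ']; exact Nat.mul_le_mul_right _ (by omega)
  have h := cnt_block b k n hb hk (k * b ^ n) hkp hle
  have h0 : cnt b k (k * b ^ n) = cnt b k (b ^ n) := by omega
  have hg := cnt_pow b k n hb hk hk2
  have hbR : (3 : ℝ) ≤ b := by exact_mod_cast hb
  have hkR : (1 : ℝ) ≤ k := by exact_mod_cast hk
  have hX : (3 : ℝ) ≤ k * (b : ℝ) ^ n := by exact_mod_cast (by omega : 3 ≤ k * b ^ n)
  rw [freq_eq, Nat.sub_add_cancel (by omega), h0, Nat.cast_sub (by omega)]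
  push_cast
  rw [div_le_div_iff₀ (by linarith) (by apply mul_pos <;> linarith)]
  have e1 : (k : ℝ) * (b - 1) * cnt b k (b ^ n) = k * ((b : ℝ) ^ n - 1) := by rw [← hg]; ring
  linarith

lemma freq_high (b k n : ℕ) (hb : 3 ≤ b) (hk : 1 ≤ k) (hk2 : k + 1 ≤ b) (hn : 1 ≤ n) :
    (b : ℝ) / (((k : ℝ) + 1) * ((b : ℝ) - 1)) ≤ leadingDigitFreq b ((k + 1) * b ^ n - 1) k := by
  have hbn : b ≤ b ^ n := Nat.le_self_pow (by omega) b
  have hkp : b ^ n ≤ (k + 1) * b ^ n := Nat.le_mul_of_pos_left _ (by omega)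
  have hle : (k + 1) * b ^ n ≤ b ^ (n + 1) := by
    rw [pow_succ']; exact Nat.mul_le_mul_right _ (by omega)
  have h := cnt_block b k n hb hk ((k + 1) * b ^ n) hkp hle
  have e : (k + 1) * b ^ n = k * b ^ n + b ^ n := by ring
  have h0 : cnt b k ((k + 1) * b ^ n) = cnt b k (b ^ n) + b ^ n := by
    rw [h, e]; omega
  have hg := cnt_pow b k n hb hk hk2
  have hbR : (3 : ℝ) ≤ b := by exact_mod_cast hb
  have hkR : (1 : ℝ) ≤ k := by exact_mod_cast hk
  have hk2R : (k : ℝ) + 1 ≤ b := by exact_mod_cast hk2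
  have hX : (3 : ℝ) ≤ (k + 1) * (b : ℝ) ^ n := by exact_mod_cast (by omega : 3 ≤ (k + 1) * b ^ n)
  rw [freq_eq, Nat.sub_add_cancel (by omega), h0, Nat.cast_sub (by omega)]
  push_cast
  rw [div_le_div_iff₀ (by apply mul_pos <;> linarith) (by linarith)]
  have e2 : ((k : ℝ) + 1) * (b - 1) * cnt b k (b ^ n) = (k + 1) * ((b : ℝ) ^ n - 1) := by
    rw [← hg]; ring
  linarith

lemma tendsto_idx (b c : ℕ) (hb : 3 ≤ b) (hc : 1 ≤ c) :
    Filter.Tendsto (fun n : ℕ => c * b ^ n - 1) Filter.atTop Filter.atTop := by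
  refine Filter.tendsto_atTop_mono (fun n => ?_) Filter.tendsto_id
  have h1 : n < b ^ n := Nat.lt_pow_self (by omega)
  have h2 : b ^ n ≤ c * b ^ n := Nat.le_mul_of_pos_left _ hc
  simp only [id]; omega

theorem freq_not_convergent (b k : ℕ) (hb : 3 ≤ b) (hk1 : 1 ≤ k) (hk2 : k ≤ b - 1) :
    (¬ ∃ L : ℝ, Filter.Tendsto (fun N : ℕ => leadingDigitFreq b N k) Filter.atTop (nhds L)) ∧
    Filter.liminf (fun N : ℕ => leadingDigitFreq b N k) Filter.atTop
      < Filter.limsup (fun N : ℕ => leadingDigitFreq b N k) Filter.atTop ∧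
    Filter.liminf (fun N : ℕ => leadingDigitFreq b N k) Filter.atTop
      = 1 / ((k : ℝ) * ((b : ℝ) - 1)) ∧
    Filter.limsup (fun N : ℕ => leadingDigitFreq b N k) Filter.atTop
      = (b : ℝ) / (((k : ℝ) + 1) * ((b : ℝ) - 1)) := by
  have hk2' : k + 1 ≤ b := by omega
  have hbR : (3 : ℝ) ≤ b := by exact_mod_cast hb
  have hkR : (1 : ℝ) ≤ k := by exact_mod_cast hk1
  have hp1 : (0 : ℝ) < k * (b - 1) := by apply mul_pos <;> linarith
  have hp2 : (0 : ℝ) < (k + 1) * (b - 1) := by apply mul_pos <;> linarith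
  set f : ℕ → ℝ := fun N : ℕ => leadingDigitFreq b N k with hf
  have hnn : ∀ N, 0 ≤ f N := fun N => by simp only [hf, leadingDigitFreq]; positivity
  have hle1 : ∀ N, f N ≤ 1 := fun N => by
    simp only [hf, leadingDigitFreq]
    apply div_le_one_of_le₀ _ (by positivity)
    have := Finset.card_filter_le (Finset.Icc 1 N) (fun x => leadingDigit b x = k)
    rw [Nat.card_Icc] at this
    exact_mod_cast this
  have bddA : Filter.IsBoundedUnder (· ≤ ·) Filter.atTop f := Filter.isBoundedUnder_of ⟨1, hle1⟩
  have bddB : Filter.IsBoundedUnder (· ≥ ·) Filter.atTop f := Filter.isBoundedUnder_of ⟨0, hnn⟩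
  have hinv : Filter.Tendsto (fun N : ℕ => (1 : ℝ) / N) Filter.atTop (nhds 0) :=
    tendsto_one_div_atTop_nhds_zero_nat
  have inf_eq : Filter.liminf f Filter.atTop = 1 / ((k : ℝ) * ((b : ℝ) - 1)) := by
    apply le_antisymm
    · apply Filter.liminf_le_of_frequently_le _ bddB
      apply (tendsto_idx b k hb hk1).frequently
      apply Filter.Eventually.frequently
      filter_upwards [Filter.eventually_ge_atTop 1] with n hn
      exact freq_low b k n hb hk1 hk2' hn
    · have ht : Filter.Tendsto (fun N : ℕ => 1 / ((k : ℝ) * (b - 1)) -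
          (k / (k * (b - 1))) * ((1 : ℝ) / N)) Filter.atTop (nhds (1 / ((k : ℝ) * (b - 1)))) := by
        simpa using (tendsto_const_nhds (x := 1 / ((k : ℝ) * (b - 1)))).sub
          (hinv.const_mul ((k : ℝ) / (k * (b - 1))))
      rw [← ht.liminf_eq]
      refine Filter.liminf_le_liminf ?_ ht.isBoundedUnder_ge bddA.isCoboundedUnder_ge
      filter_upwards [Filter.eventually_ge_atTop 1] with N hN
      have hNR : (0 : ℝ) < N := by exact_mod_cast hN
      have h := (cnt_bounds b k (N + 1) hb hk1 hk2' (by omega)).1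
      push_cast at h
      simp only [hf, freq_eq]
      have e : 1 / ((k : ℝ) * (b - 1)) - (k / (k * (b - 1))) * ((1 : ℝ) / N)
        = (N - k) / (k * (b - 1)) / N := by field_simp
      rw [e]
      apply div_le_div_of_nonneg_right _ hNR.le
      rw [div_le_iff₀ hp1]
      linarith
  have sup_eq : Filter.limsup f Filter.atTop = (b : ℝ) / (((k : ℝ) + 1) * ((b : ℝ) - 1)) := by
    apply le_antisymm
    · have ht : Filter.Tendsto (fun N : ℕ => b / (((k : ℝ) + 1) * (b - 1)) +
          (b / ((k + 1) * (b - 1))) * ((1 : ℝ) / N)) Filter.atTop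
          (nhds (b / (((k : ℝ) + 1) * (b - 1)))) := by
        simpa using (tendsto_const_nhds (x := b / (((k : ℝ) + 1) * (b - 1)))).add
          (hinv.const_mul ((b : ℝ) / ((k + 1) * (b - 1))))
      rw [← ht.limsup_eq]
      refine Filter.limsup_le_limsup ?_ bddB.isCoboundedUnder_le ht.isBoundedUnder_le
      filter_upwards [Filter.eventually_ge_atTop 1] with N hN
      have hNR : (0 : ℝ) < N := by exact_mod_cast hN
      have h := (cnt_bounds b k (N + 1) hb hk1 hk2' (by omega)).2
      push_cast at h
      simp only [hf, freq_eq]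
      have e : b / (((k : ℝ) + 1) * (b - 1)) + (b / ((k + 1) * (b - 1))) * ((1 : ℝ) / N)
        = (b * (N + 1)) / ((k + 1) * (b - 1)) / N := by field_simp
      rw [e]
      apply div_le_div_of_nonneg_right _ hNR.le
      rw [le_div_iff₀ hp2]
      linarith
    · apply Filter.le_limsup_of_frequently_le _ bddA
      apply (tendsto_idx b (k + 1) hb (by omega)).frequently
      apply Filter.Eventually.frequently
      filter_upwards [Filter.eventually_ge_atTop 1] with n hn
      exact freq_high b k n hb hk1 hk2' hn
  have hlt : Filter.liminf f Filter.atTop < Filter.limsup f Filter.atTop := by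
    rw [inf_eq, sup_eq, div_lt_div_iff₀ hp1 hp2]
    have : (k : ℝ) + 1 < b * k := by nlinarith
    nlinarith
  refine ⟨?_, hlt, inf_eq, sup_eq⟩
  rintro ⟨L, hL⟩
  rw [hL.liminf_eq, hL.limsup_eq] at hlt
  exact lt_irrefl _ hlt
end

section
/- For every integer b ≥ 2 and every integer k with 1 ≤ k ≤ b − 1, every subsequential limit of the sequence (P_{b,N}(k))_{N=1}^{∞} lies in the closed interval [1/(k(b − 1)), b/((k+1)(b − 1))]. -/
/-- The number of `x` in `1, …, N` with leading digit `k`. -/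
def ldCount (b k N : ℕ) : ℕ :=
  ((Finset.Icc 1 N).filter (fun x => leadingDigit b x = k)).card

theorem ldCount_succ (b k N : ℕ) :
    ldCount b k (N + 1) = ldCount b k N + if leadingDigit b (N + 1) = k then 1 else 0 := by
  unfold ldCount
  rw [← Finset.insert_Icc_right_eq_Icc_add_one (by omega), Finset.filter_insert]
  split_ifs with h
  · rw [Finset.card_insert_of_notMem (by simp)]
  · rfl

theorem leadingDigit_eq_iff (b k N m : ℕ) (hb : 2 ≤ b) (h1 : b ^ m ≤ N) (h2 : N < b ^ (m + 1)) :
    leadingDigit b N = k ↔ k * b ^ m ≤ N ∧ N < (k + 1) * b ^ m := by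
  have hl : Nat.log b N = m := Nat.log_eq_of_pow_le_of_lt_pow h1 h2
  have hp : 0 < b ^ m := by positivity
  unfold leadingDigit
  rw [hl, ← Nat.le_div_iff_mul_le hp, ← Nat.div_lt_iff_lt_mul hp]
  omega

theorem ldCount_formula (d k : ℕ) (hd : 1 ≤ d) (hk1 : 1 ≤ k) (hk2 : k ≤ d) (N : ℕ) :
    ∀ m, (d + 1) ^ m ≤ N → N < (d + 1) ^ (m + 1) →
      d * ldCount (d + 1) k N + 1 = (d + 1) ^ m +
        d * (min (N + 1) ((k + 1) * (d + 1) ^ m) - min (N + 1) (k * (d + 1) ^ m)) := by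
  induction N with
  | zero =>
    intro m h1 _
    have hp : 0 < (d + 1) ^ m := by positivity
    omega
  | succ N ih =>
    intro m h1 h2
    have hp : 0 < (d + 1) ^ m := by positivity
    have hiff := leadingDigit_eq_iff (d + 1) k (N + 1) m (by omega) h1 h2
    rw [ldCount_succ]
    have e1 : (k + 1) * (d + 1) ^ m = k * (d + 1) ^ m + (d + 1) ^ m := by ring
    have e2 : (d + 1) ^ m ≤ k * (d + 1) ^ m := Nat.le_mul_of_pos_left _ hk1
    by_cases h : (d + 1) ^ m ≤ N
    · have := ih m h (by omega)
      rw [mul_add, add_right_comm, this, add_assoc, ← mul_add]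
      congr 2
      split_ifs with hc
      · rw [hiff] at hc
        omega
      · rw [hiff] at hc
        omega
    · have hN : N + 1 = (d + 1) ^ m := by omega
      have hE : min (N + 1 + 1) ((k + 1) * (d + 1) ^ m) - min (N + 1 + 1) (k * (d + 1) ^ m)
          = if leadingDigit (d + 1) (N + 1) = k then 1 else 0 := by
        split_ifs with hc
        · rw [hiff] at hc
          omega
        · rw [hiff] at hc
          omega
      rw [hE, mul_add, add_right_comm]
      congr 1
      rcases m with _ | m
      · have : N = 0 := by simpa using hN
        subst this
        simp [ldCount]
      · have hq : 0 < (d + 1) ^ m := by positivity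
        have e3 : (d + 1) ^ (m + 1) = d * (d + 1) ^ m + (d + 1) ^ m := by ring
        have e4 : (d + 1) ^ m ≤ d * (d + 1) ^ m := Nat.le_mul_of_pos_left _ hd
        have e5 : (k + 1) * (d + 1) ^ m ≤ (d + 1) * (d + 1) ^ m :=
          Nat.mul_le_mul_right _ (by omega)
        have e6 : (k + 1) * (d + 1) ^ m = k * (d + 1) ^ m + (d + 1) ^ m := by ring
        have e7 : (d + 1) * (d + 1) ^ m = d * (d + 1) ^ m + (d + 1) ^ m := by ring
        rw [ih m (by omega) (by omega)]
        have : min (N + 1) ((k + 1) * (d + 1) ^ m) - min (N + 1) (k * (d + 1) ^ m)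
            = (d + 1) ^ m := by omega
        rw [this, e3]
        ring

theorem ldCount_bounds (d k N : ℕ) (hd : 1 ≤ d) (hk1 : 1 ≤ k) (hk2 : k ≤ d) (hN : 1 ≤ N) :
    N + 1 ≤ k * (d * ldCount (d + 1) k N + 1) ∧
      (k + 1) * (d * ldCount (d + 1) k N + 1) ≤ (d + 1) * (N + 1) := by
  have h1 := Nat.pow_log_le_self (d + 1) (x := N) (by omega)
  have h2 := Nat.lt_pow_succ_log_self (b := d + 1) (by omega) N
  rw [ldCount_formula d k hd hk1 hk2 N _ h1 h2]
  rw [pow_succ] at h2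
  generalize (d + 1) ^ Nat.log (d + 1) N = p at *
  have e6 : (k + 1) * p = k * p + p := by ring
  rcases le_total (N + 1) (k * p) with h | h
  · have : min (N + 1) ((k + 1) * p) - min (N + 1) (k * p) = 0 := by omega
    rw [this]
    constructor
    · simpa using h
    · simpa using Nat.mul_le_mul (by omega : k + 1 ≤ d + 1) (by omega : p ≤ N + 1)
  · rcases le_total (N + 1) ((k + 1) * p) with h' | h'
    · obtain ⟨t, ht⟩ := Nat.exists_eq_add_of_le h
      have : min (N + 1) ((k + 1) * p) - min (N + 1) (k * p) = t := by omega
      rw [this, ht]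
      have htp : t ≤ p := by omega
      constructor
      · nlinarith [Nat.mul_le_mul hk1 hd, Nat.mul_le_mul_right t (Nat.mul_le_mul hk1 hd)]
      · obtain ⟨s, rfl⟩ := Nat.exists_eq_add_of_le htp
        obtain ⟨j, rfl⟩ := Nat.exists_eq_add_of_le hk1
        have hs : (1 + j + 1) * s ≤ (d + 1) * (1 + j) * s := by
          apply Nat.mul_le_mul_right
          nlinarith
        nlinarith
    · have : min (N + 1) ((k + 1) * p) - min (N + 1) (k * p) = p := by omega
      rw [this]
      constructor
      · nlinarith
      · nlinarith [Nat.mul_le_mul_left (d + 1) h']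

theorem subseq_limits_mem_Icc (b k : ℕ) (hb : 2 ≤ b) (hk1 : 1 ≤ k) (hk2 : k ≤ b - 1)
    (φ : ℕ → ℕ) (hφ : StrictMono φ) (L : ℝ)
    (hL : Filter.Tendsto (fun n : ℕ => leadingDigitFreq b (φ n) k) Filter.atTop (nhds L)) :
    L ∈ Set.Icc (1 / ((k : ℝ) * ((b : ℝ) - 1))) ((b : ℝ) / (((k : ℝ) + 1) * ((b : ℝ) - 1))) := by
  obtain ⟨d, rfl⟩ : ∃ d, b = d + 1 := ⟨b - 1, by omega⟩
  have hd : 1 ≤ d := by omega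
  have hkd : k ≤ d := by omega
  have hd0 : (0 : ℝ) < d := by exact_mod_cast hd
  have hk0 : (0 : ℝ) < k := by exact_mod_cast hk1
  have hbd : (((d + 1 : ℕ) : ℝ) - 1) = d := by push_cast; ring
  have hz : Filter.Tendsto (fun n : ℕ => (1 : ℝ) / (φ n : ℝ)) Filter.atTop (nhds 0) :=
    tendsto_one_div_atTop_nhds_zero_nat.comp hφ.tendsto_atTop
  rw [hbd]
  have hpos : ∀ᶠ n in Filter.atTop, 1 ≤ φ n := hφ.tendsto_atTop.eventually_ge_atTop 1
  constructor
  · rw [div_le_iff₀ (by positivity)]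
    have l1 : Filter.Tendsto (fun n : ℕ => leadingDigitFreq (d + 1) (φ n) k * (k * d)
        + k * (1 / (φ n : ℝ))) Filter.atTop (nhds (L * (k * d) + k * 0)) :=
      (hL.mul_const _).add (hz.const_mul _)
    rw [mul_zero, add_zero] at l1
    refine ge_of_tendsto l1 ?_
    filter_upwards [hpos] with n hn
    have hB := (ldCount_bounds d k (φ n) hd hk1 hkd hn).1
    have hB' : (φ n : ℝ) + 1 ≤ k * (d * ldCount (d + 1) k (φ n) + 1) := by exact_mod_cast hB
    have hn0 : (0 : ℝ) < φ n := by exact_mod_cast hn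
    have : leadingDigitFreq (d + 1) (φ n) k * (k * d) + k * (1 / (φ n : ℝ))
        = (k * (d * ldCount (d + 1) k (φ n) + 1)) / φ n := by
      unfold leadingDigitFreq ldCount
      field_simp
    rw [this, le_div_iff₀ hn0]
    linarith
  · rw [le_div_iff₀ (by positivity)]
    have l1 : Filter.Tendsto (fun n : ℕ => leadingDigitFreq (d + 1) (φ n) k * ((k + 1) * d)
        - (d + 1) * (1 / (φ n : ℝ))) Filter.atTop (nhds (L * ((k + 1) * d) - (d + 1) * 0)) :=
      (hL.mul_const _).sub (hz.const_mul _)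
    rw [mul_zero, sub_zero] at l1
    refine le_of_tendsto l1 ?_
    filter_upwards [hpos] with n hn
    have hB := (ldCount_bounds d k (φ n) hd hk1 hkd hn).2
    have hB' : ((k : ℝ) + 1) * (d * ldCount (d + 1) k (φ n) + 1) ≤ (d + 1) * (φ n + 1) := by
      exact_mod_cast hB
    have hn0 : (0 : ℝ) < φ n := by exact_mod_cast hn
    have : leadingDigitFreq (d + 1) (φ n) k * ((k + 1) * d) - (d + 1) * (1 / (φ n : ℝ))
        = ((k + 1) * (d * ldCount (d + 1) k (φ n)) - (d + 1)) / φ n := by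
      unfold leadingDigitFreq ldCount
      field_simp
    rw [this, div_le_iff₀ hn0]
    push_cast
    linarith
end

section
/- For every integer b ≥ 2 and every integer k with 1 ≤ k ≤ b − 1, the Benford probability log_b(1 + 1/k) lies in the closed interval [1/(k(b − 1)), b/((k+1)(b − 1))] determined by the liminf and limsup of the natural-density leading-digit frequencies. -/
theorem bern_aux (c t : ℝ) (hc : 0 < c) (h0 : 0 ≤ t) (h1 : t ≤ 1) :
    t * Real.log c ≤ Real.log (1 + t * (c - 1)) := by
  have h := rpow_one_add_le_one_add_mul_self (s := c - 1) (by linarith) h0 h1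
  rw [add_sub_cancel] at h
  rw [← Real.log_rpow hc]
  exact Real.log_le_log (Real.rpow_pos_of_pos hc t) h

theorem benford_mem_Icc (b k : ℕ) (hb : 2 ≤ b) (hk1 : 1 ≤ k) (hk2 : k ≤ b - 1) :
    Real.logb b (1 + 1 / (k : ℝ))
      ∈ Set.Icc (1 / ((k : ℝ) * ((b : ℝ) - 1))) ((b : ℝ) / (((k : ℝ) + 1) * ((b : ℝ) - 1))) := by
  have hB : (2 : ℝ) ≤ b := by exact_mod_cast hb
  have hK : (1 : ℝ) ≤ k := by exact_mod_cast hk1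
  have hB1 : (0 : ℝ) < (b : ℝ) - 1 := by linarith
  have hB0 : (0 : ℝ) < b := by linarith
  have hK0 : (0 : ℝ) < k := by linarith
  have hlog : 0 < Real.log b := Real.log_pos (by linarith)
  rw [Real.logb]
  constructor
  · rw [le_div_iff₀ hlog]
    have h := bern_aux b (1 / ((k : ℝ) * ((b : ℝ) - 1))) hB0 (by positivity)
      (by rw [div_le_one (by positivity)]; nlinarith)
    have e : 1 + 1 / ((k : ℝ) * ((b : ℝ) - 1)) * ((b : ℝ) - 1) = 1 + 1 / (k : ℝ) := by
      have := hB1.ne'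
      field_simp
    rwa [e] at h
  · rw [div_le_iff₀ hlog]
    have h := bern_aux (b : ℝ)⁻¹ ((b : ℝ) / (((k : ℝ) + 1) * ((b : ℝ) - 1))) (by positivity)
      (by positivity) (by rw [div_le_one (by positivity)]; nlinarith)
    have e : 1 + (b : ℝ) / (((k : ℝ) + 1) * ((b : ℝ) - 1)) * ((b : ℝ)⁻¹ - 1)
        = (1 + 1 / (k : ℝ))⁻¹ := by
      have := hB1.ne'
      field_simp
      ring
    rw [e, Real.log_inv, Real.log_inv] at h
    linarith
end
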